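/- arXiv:2104.06883 — 2 statements merged into one kernel-verified Lean document; each statement's English description precedes it below -/
import Mathlib

section
/- Fix a polarization w = (w₁,…,w_γ), rational numbers r > 0 and d, a natural number k, an integer χ, and a real number M > 0. Then the set of rational numbers α with 0 < α < M for which there exist: a natural number k' with 0 ≤ k' ≤ k; integers r₁',…,r_γ' with 0 ≤ rᵢ' ≤ r/w_m for each i, where r' := Σᵢ wᵢ rᵢ'; and a rational number d' with d' + r'·χ ∈ ℤ, such that r'·k ≠ r·k' and α = (r·d' − r'·d)/(r'·k − r·k'), is a finite set. (This is the finiteness of critical values in Lemma 3.1 of the paper: for coherent systems of type (r,d,k) on a polarized nodal curve with χ = χ(O_C), there are only finitely many critical values of α in any bounded interval (0,M).) -/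
/- A polarization on a nodal curve with `γ` components is `w = (w₁,…,w_γ)` with
`0 < wᵢ < 1` and `Σ wᵢ = 1`; `w_m = minᵢ wᵢ`.  For a depth one sheaf with restriction
ranks `rᵢ'`, the `w`-rank is `r' = Σ wᵢ rᵢ'` and the `w`-degree `d'` satisfies
`d' + r'·χ(O_C) ∈ ℤ`. -/

open Finset

theorem aux_finite (a b N : ℚ) (ha : a ≠ 0) :
    {α : ℚ | 0 < α ∧ α < N ∧ ∃ n : ℤ, α = a * n + b}.Finite := by
  have ha' : 0 < |a| := abs_pos.mpr ha
  refine Set.Finite.subset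
    ((Set.finite_Icc (-⌈(N + |b|) / |a|⌉) ⌈(N + |b|) / |a|⌉).image
      (fun n : ℤ => a * (n : ℚ) + b)) ?_
  rintro α ⟨h0, hN, n, rfl⟩
  refine ⟨n, ?_, rfl⟩
  have h1 : |(n : ℚ)| ≤ (N + |b|) / |a| := by
    rw [le_div_iff₀ ha', ← abs_mul, mul_comm, abs_le]
    have := le_abs_self b
    have := neg_abs_le b
    constructor <;> linarith
  have h2 : |(n : ℚ)| ≤ (⌈(N + |b|) / |a|⌉ : ℚ) := h1.trans (Int.le_ceil _)
  have h3 : |n| ≤ ⌈(N + |b|) / |a|⌉ := by exact_mod_cast h2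
  exact abs_le.mp h3

/-- **Lemma 3.1 (finiteness of critical values)**: for coherent systems of type
`(r,d,k)` on a polarized nodal curve, the set of critical values `α` in a bounded
interval `(0, M)` is finite. -/
theorem stmt10 (γ : ℕ) (hγ : 0 < γ) (w : Fin γ → ℚ)
    (hw : ∀ i, 0 < w i ∧ w i < 1) (hsum : ∑ i, w i = 1)
    (r d : ℚ) (hr : 0 < r) (k : ℕ) (χ : ℤ) (M : ℝ) (hM : 0 < M) :
    {α : ℚ | 0 < α ∧ (α : ℝ) < M ∧
      ∃ (k' : ℕ) (rv : Fin γ → ℤ) (r' d' : ℚ),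
        k' ≤ k ∧
        (∀ i, 0 ≤ rv i ∧ (rv i : ℚ) ≤
          r / (univ.inf' (univ_nonempty_iff.mpr ⟨⟨0, hγ⟩⟩) w)) ∧
        r' = ∑ i, w i * rv i ∧
        (∃ n : ℤ, d' + r' * (χ : ℚ) = (n : ℚ)) ∧
        r' * (k : ℚ) ≠ r * (k' : ℚ) ∧
        α = (r * d' - r' * d) / (r' * (k : ℚ) - r * (k' : ℚ))}.Finite := by
  obtain ⟨N, hN⟩ := exists_nat_gt M
  set B := r / (univ.inf' (univ_nonempty_iff.mpr ⟨⟨0, hγ⟩⟩) w) with hB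
  have hfin : (Set.Iic k ×ˢ Set.Icc (0 : Fin γ → ℤ) (fun _ => ⌊B⌋)).Finite :=
    (Set.finite_Iic k).prod (Set.finite_Icc _ _)
  have hU := hfin.biUnion (t := fun p => {α : ℚ | 0 < α ∧ α < N ∧
      (∑ i, w i * p.2 i) * (k : ℚ) - r * (p.1 : ℚ) ≠ 0 ∧ ∃ n : ℤ,
      α = r / ((∑ i, w i * p.2 i) * (k : ℚ) - r * (p.1 : ℚ)) * n +
        (-(r * ((∑ i, w i * p.2 i) * χ)) - (∑ i, w i * p.2 i) * d) /
          ((∑ i, w i * p.2 i) * (k : ℚ) - r * (p.1 : ℚ))}) (by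
    intro p _
    by_cases hD : (∑ i, w i * p.2 i) * (k : ℚ) - r * (p.1 : ℚ) = 0
    · simp [hD]
    · refine (aux_finite (r / ((∑ i, w i * p.2 i) * (k : ℚ) - r * (p.1 : ℚ)))
        ((-(r * ((∑ i, w i * p.2 i) * χ)) - (∑ i, w i * p.2 i) * d) /
          ((∑ i, w i * p.2 i) * (k : ℚ) - r * (p.1 : ℚ))) N
        (div_ne_zero hr.ne' hD)).subset ?_
      rintro α ⟨h0, h1, _, h2⟩
      exact ⟨h0, h1, h2⟩)
  refine hU.subset ?_
  rintro α ⟨h0, h1, k', rv, r', d', hk, hrv, hr', ⟨n, hn⟩, hne, hα⟩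
  refine Set.mem_biUnion (x := (k', rv)) ⟨hk, fun i => (hrv i).1,
    fun i => Int.le_floor.mpr (hrv i).2⟩ ⟨h0, ?_, ?_, n, ?_⟩
  · exact_mod_cast h1.trans hN
  · simp only [← hr']
    exact sub_ne_zero.mpr hne
  · simp only [← hr']
    rw [hα, ← hn, div_mul_eq_mul_div, ← add_div]
    congr 1
    ring
end

section
/- Let γ ≥ 1 and δ ≥ 0 be integers, let w = (w₁,…,w_γ) be a polarization with w_m = minᵢ wᵢ, let g₁,…,g_γ be integers with gᵢ ≥ 2, let r₁,…,r_γ be natural numbers with r_M := maxᵢ rᵢ, and let s₁,…,s_δ be natural numbers with 0 ≤ sⱼ ≤ r_M for each j. Set p_a = Σᵢ gᵢ + δ − γ + 1, wrk = Σᵢ wᵢ rᵢ, and Δ = Σᵢ rᵢ(1 − gᵢ) + wrk·(p_a − 1) − Σⱼ sⱼ. Then Δ ≥ −(r_M − wrk)·(p_a − 1) ≥ −((1/w_m) − 1)·wrk·(p_a − 1). (This is Lemma 1.4(d) of the paper, expressed via the formula of Lemma 1.4(a): for a depth one sheaf E on a polarized nodal curve with γ components of genera gᵢ ≥ 2, δ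 nodes, restriction ranks rᵢ, and free-part ranks sⱼ at the nodes, one has Δ_w(E) ≥ −(r_M − w-rank(E))(p_a(C) − 1) ≥ −((1/w_m) − 1)·w-rank(E)·(p_a(C) − 1).) -/
/- A nodal curve with `γ ≥ 1` smooth components of genera `gᵢ ≥ 2` and `δ ≥ 0` nodes
has arithmetic genus `p_a = Σ gᵢ + δ − γ + 1`.  A polarization is `w` with
`0 < wᵢ < 1`, `Σ wᵢ = 1`, `w_m = minᵢ wᵢ`.  For a depth one sheaf `E` with restriction
ranks `rᵢ` (`r_M = maxᵢ rᵢ`) and free-part ranks `sⱼ ≤ r_M` at the nodes,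
`Δ_w(E) = Σᵢ rᵢ(1 − gᵢ) + (Σᵢ wᵢrᵢ)(p_a − 1) − Σⱼ sⱼ`. -/

open Finset

/-- **Lemma 1.4(d)**:
`Δ_w(E) ≥ −(r_M − wrk(E))(p_a − 1) ≥ −((1/w_m) − 1)·wrk(E)·(p_a − 1)`. -/
theorem stmt12 (γ δ : ℕ) (hγ : 0 < γ) (w : Fin γ → ℚ)
    (hw : ∀ i, 0 < w i ∧ w i < 1) (hsum : ∑ i, w i = 1)
    (g : Fin γ → ℤ) (hg : ∀ i, 2 ≤ g i)
    (r : Fin γ → ℕ) (s : Fin δ → ℕ)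
    (wm rM : ℚ)
    (hwm : wm = univ.inf' (univ_nonempty_iff.mpr ⟨⟨0, hγ⟩⟩) w)
    (hrM : rM = univ.sup' (univ_nonempty_iff.mpr ⟨⟨0, hγ⟩⟩) (fun i => (r i : ℚ)))
    (hs : ∀ j, (s j : ℚ) ≤ rM)
    (pa wrk Δ : ℚ)
    (hpa : pa = ∑ i, (g i : ℚ) + (δ : ℚ) - (γ : ℚ) + 1)
    (hwrk : wrk = ∑ i, w i * (r i : ℚ))
    (hΔ : Δ = ∑ i, (r i : ℚ) * (1 - (g i : ℚ)) + wrk * (pa - 1) - ∑ j, (s j : ℚ)) :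
    -(rM - wrk) * (pa - 1) ≤ Δ ∧
    -((1 / wm) - 1) * wrk * (pa - 1) ≤ -(rM - wrk) * (pa - 1) := by
  have hr : ∀ i, (r i : ℚ) ≤ rM := by
    intro i
    rw [hrM]
    exact Finset.le_sup' (fun i => (r i : ℚ)) (mem_univ i)
  have hg' : ∀ i, (2 : ℚ) ≤ (g i : ℚ) := fun i => by exact_mod_cast hg i
  have hpa1 : pa - 1 = ∑ i, ((g i : ℚ) - 1) + (δ : ℚ) := by
    rw [hpa, Finset.sum_sub_distrib]
    simp
    ring
  have hpa0 : 0 ≤ pa - 1 := by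
    rw [hpa1]
    have : 0 ≤ ∑ i, ((g i : ℚ) - 1) := Finset.sum_nonneg (fun i _ => by linarith [hg' i])
    positivity
  constructor
  · have h1 : 0 ≤ ∑ i, (rM - (r i : ℚ)) * ((g i : ℚ) - 1) :=
      Finset.sum_nonneg (fun i _ => mul_nonneg (by linarith [hr i]) (by linarith [hg' i]))
    have h2 : 0 ≤ ∑ j, (rM - (s j : ℚ)) :=
      Finset.sum_nonneg (fun j _ => by linarith [hs j])
    have h3 : ∑ i, (rM - (r i : ℚ)) * ((g i : ℚ) - 1)
        = rM * ∑ i, ((g i : ℚ) - 1) + ∑ i, (r i : ℚ) * (1 - (g i : ℚ)) := by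
      rw [Finset.mul_sum, ← Finset.sum_add_distrib]
      exact Finset.sum_congr rfl (fun i _ => by ring)
    have h4 : ∑ j, (rM - (s j : ℚ)) = rM * (δ : ℚ) - ∑ j, (s j : ℚ) := by
      rw [Finset.sum_sub_distrib]
      simp
      ring
    have h5 : rM * (pa - 1) = rM * ∑ i, ((g i : ℚ) - 1) + rM * (δ : ℚ) := by
      rw [hpa1]; ring
    rw [hΔ]
    linarith
  · have hne : (univ : Finset (Fin γ)).Nonempty := univ_nonempty_iff.mpr ⟨⟨0, hγ⟩⟩
    have hwm0 : 0 < wm := by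
      rw [hwm, Finset.lt_inf'_iff]
      exact fun i _ => (hw i).1
    obtain ⟨k, -, hk⟩ := Finset.exists_mem_eq_sup' hne (fun i => (r i : ℚ))
    have hk' : rM = (r k : ℚ) := by rw [hrM]; exact hk
    have hwk : wm ≤ w k := by
      rw [hwm]
      exact Finset.inf'_le w (mem_univ k)
    have h1 : w k * (r k : ℚ) ≤ wrk := by
      rw [hwrk]
      exact Finset.single_le_sum (f := fun i => w i * (r i : ℚ))
        (fun i _ => mul_nonneg (hw i).1.le (Nat.cast_nonneg _)) (mem_univ k)
    have h2 : rM * wm ≤ wrk := by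
      have := mul_le_mul_of_nonneg_right hwk (Nat.cast_nonneg (α := ℚ) (r k))
      rw [hk']
      linarith
    have h3 : rM ≤ 1 / wm * wrk := by
      rw [one_div_mul_eq_div, le_div_iff₀ hwm0]
      exact h2
    apply mul_le_mul_of_nonneg_right _ hpa0
    linarith
end
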